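/- Let g ≥ 1, n ≥ 3, and let A = (α₁,…,αₙ) be a unit fraction partition of g with α₁ ≤ ⋯ ≤ αₙ. Then α₁·α₂⋯αₙ ≤ t_{g,n}²/g, and equality holds if and only if A = (s_{g,1}, …, s_{g,n−1}, t_{g,n}). -/

import Mathlib

open Finset

/-- The `g`-Sylvester sequence: `s_{g,1} = g+1`, `s_{g,k+1} = s_{g,k}(s_{g,k}-1)+1`.
(The value at `0` is junk and never used.) -/
def sylv (g : ℕ) : ℕ → ℕ
  | 0 => 0
  | 1 => g + 1
  | k + 2 => sylv g (k + 1) * (sylv g (k + 1) - 1) + 1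

/-- The truncated `g`-Sylvester sequence `t_{g,k} = s_{g,k} - 1`. -/
def tsylv (g k : ℕ) : ℕ := sylv g k - 1

/-- `A` is a unit fraction partition of `g`: a tuple of positive integers with
`1/g = ∑ 1/αᵢ`. -/
def IsUFP {n : ℕ} (g : ℕ) (A : Fin n → ℕ) : Prop :=
  (∀ i, 0 < A i) ∧ (1 : ℚ) / (g : ℚ) = ∑ i, (1 : ℚ) / (A i : ℚ)

/-- Abel summation inequality. -/
lemma abel_aux (c d : ℕ → ℝ) (m : ℕ) (hc : ∀ i, i < m → c (i + 1) ≤ c i)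
    (hd : ∀ k, k ≤ m → 0 ≤ ∑ i ∈ range (k + 1), d i) :
    c m * ∑ i ∈ range (m + 1), d i ≤ ∑ i ∈ range (m + 1), c i * d i := by
  induction m with
  | zero => simp
  | succ m ih =>
    have h1 := ih (fun i hi => hc i (by omega)) (fun k hk => hd k (by omega))
    rw [sum_range_succ d, sum_range_succ (fun i => c i * d i)]
    have h2 := hd m (by omega)
    have h3 := hc m (by omega)
    nlinarith [mul_le_mul_of_nonneg_right h3 h2]

/-- If the partial products of `y` (nonincreasing) are at most those of `w` and the sum of `y`
is at least that of `w`, then `y = w`. -/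
lemma maj_aux (y w : ℕ → ℝ) (m : ℕ) (hy : ∀ i, i ≤ m → 0 < y i) (hw : ∀ i, i ≤ m → 0 < w i)
    (hanti : ∀ i, i < m → y (i + 1) ≤ y i)
    (hp : ∀ k, k ≤ m → ∏ i ∈ range (k + 1), y i ≤ ∏ i ∈ range (k + 1), w i)
    (hs : ∑ i ∈ range (m + 1), w i ≤ ∑ i ∈ range (m + 1), y i) :
    ∀ i, i ≤ m → y i = w i := by
  have hA := abel_aux y (fun i => Real.log (w i) - Real.log (y i)) m hanti (by
    intro k hk
    rw [sum_sub_distrib, ← Real.log_prod (fun i hi => (hw i (by simp at hi; omega)).ne'),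
      ← Real.log_prod (fun i hi => (hy i (by simp at hi; omega)).ne')]
    have := Real.log_le_log (prod_pos (fun i hi => hy i (by simp at hi; omega))) (hp k hk)
    linarith)
  have hB : 0 ≤ ∑ i ∈ range (m + 1), (Real.log (w i) - Real.log (y i)) := by
    rw [sum_sub_distrib, ← Real.log_prod (fun i hi => (hw i (by simp at hi; omega)).ne'),
      ← Real.log_prod (fun i hi => (hy i (by simp at hi; omega)).ne')]
    have := Real.log_le_log (prod_pos (fun i hi => hy i (by simp at hi; omega))) (hp m le_rfl)
    linarith
  have hC : 0 ≤ ∑ i ∈ range (m + 1), y i * (Real.log (w i) - Real.log (y i)) :=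
    (mul_nonneg (hy m le_rfl).le hB).trans hA
  by_contra! hcon
  obtain ⟨j, hj, hne⟩ := hcon
  have key : ∀ i, i ≤ m → y i * (Real.log (w i) - Real.log (y i)) ≤ w i - y i := by
    intro i hi
    have h1 := hy i hi
    have h2 := hw i hi
    rw [← Real.log_div h2.ne' h1.ne']
    have h3 := mul_le_mul_of_nonneg_left (Real.log_le_sub_one_of_pos (div_pos h2 h1)) h1.le
    have h4 : y i * (w i / y i - 1) = w i - y i := by field_simp
    linarith
  have keys : y j * (Real.log (w j) - Real.log (y j)) < w j - y j := by
    have h1 := hy j hj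
    have h2 := hw j hj
    rw [← Real.log_div h2.ne' h1.ne']
    have h3 := mul_lt_mul_of_pos_left (Real.log_lt_sub_one_of_pos (div_pos h2 h1) (by
      intro h
      rw [div_eq_one_iff_eq h1.ne'] at h
      exact hne h.symm)) h1
    have h4 : y j * (w j / y j - 1) = w j - y j := by field_simp
    linarith
  have := sum_lt_sum (s := range (m + 1)) (fun i hi => key i (by simp at hi; omega))
    ⟨j, by simp; omega, keys⟩
  rw [sum_sub_distrib] at this
  linarith

/-- Core extremal lemma. Length is `m+1`. -/
lemma core_aux (y w : ℕ → ℝ) (m : ℕ) (c : ℝ) (hc : 0 < c)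
    (hy : ∀ i, i ≤ m → 0 < y i) (hw : ∀ i, i ≤ m → 0 < w i)
    (hanti : ∀ i, i < m → y (i + 1) ≤ y i)
    (hyc : ∀ k, k ≤ m → c * ∏ i ∈ range k, y i ≤ ∑ i ∈ range (m + 1 - k), y (k + i))
    (hwc : ∀ k, k ≤ m → c * ∏ i ∈ range k, w i = ∑ i ∈ range (m + 1 - k), w (k + i))
    (j : ℕ) (hj : j ≤ m)
    (hp : ∀ l, j < l → l ≤ m + 1 → ∏ i ∈ range l, y i ≤ ∏ i ∈ range l, w i) :
    ∀ i, j ≤ i → i ≤ m → y i = w i := by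
  induction j with
  | zero =>
    intro i _ hi
    refine maj_aux y w m hy hw hanti (fun k hk => hp (k+1) (by omega) (by omega)) ?_ i hi
    have h1 := hyc 0 (by omega)
    have h2 := hwc 0 (by omega)
    simp at h1 h2
    linarith
  | succ j ih =>
    by_cases hlt : ∏ i ∈ range (j + 1), y i < ∏ i ∈ range (j + 1), w i
    · intro i hi him
      refine ih (by omega) ?_ i (by omega) him
      intro l hl hlm
      rcases Nat.lt_or_ge (j + 1) l with h | h
      · exact hp l h hlm
      · obtain rfl : l = j + 1 := by omega
        exact hlt.le
    · push Not at hlt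
      have hm := maj_aux (fun i => y (j + 1 + i)) (fun i => w (j + 1 + i)) (m - (j + 1))
        (fun i hi => hy _ (by omega)) (fun i hi => hw _ (by omega))
        (fun i hi => hanti (j + 1 + i) (by omega)) (by
          intro k hk
          have h1 := hp (j + 1 + (k + 1)) (by omega) (by omega)
          rw [prod_range_add y (j + 1) (k + 1), prod_range_add w (j + 1) (k + 1)] at h1
          have hW : 0 < ∏ i ∈ range (j + 1), w i :=
            prod_pos (fun i hi => hw i (by simp at hi; omega))
          have hY : 0 < ∏ i ∈ range (k + 1), y (j + 1 + i) :=
            prod_pos (fun i hi => hy _ (by simp at hi; omega))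
          refine le_of_mul_le_mul_left ?_ hW
          exact (mul_le_mul_of_nonneg_right hlt hY.le).trans h1) (by
          have h1 := hyc (j + 1) hj
          have h2 := hwc (j + 1) hj
          have e : m - (j + 1) + 1 = m + 1 - (j + 1) := by omega
          rw [e, ← h2]
          exact (mul_le_mul_of_nonneg_left hlt hc.le).trans h1)
      intro i hi him
      have := hm (i - (j + 1)) (by omega)
      rwa [show j + 1 + (i - (j + 1)) = i by omega] at this

lemma full_aux (y w : ℕ → ℝ) (m : ℕ) (c : ℝ) (hc : 0 < c)
    (hy : ∀ i, i ≤ m → 0 < y i) (hw : ∀ i, i ≤ m → 0 < w i)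
    (hanti : ∀ i, i < m → y (i + 1) ≤ y i)
    (hyc : ∀ k, k ≤ m → c * ∏ i ∈ range k, y i ≤ ∑ i ∈ range (m + 1 - k), y (k + i))
    (hwc : ∀ k, k ≤ m → c * ∏ i ∈ range k, w i = ∑ i ∈ range (m + 1 - k), w (k + i))
    (hp : ∏ i ∈ range (m + 1), y i ≤ ∏ i ∈ range (m + 1), w i) :
    ∀ i, i ≤ m → y i = w i := by
  have main : ∀ d, d ≤ m + 1 → ∀ l, m + 1 - d ≤ l → l ≤ m + 1 →
      ∏ i ∈ range l, y i ≤ ∏ i ∈ range l, w i := by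
    intro d
    induction d with
    | zero =>
      intro _ l h1 h2
      obtain rfl : l = m + 1 := by omega
      exact hp
    | succ d ih =>
      intro hd l h1 h2
      have ih' := ih (by omega)
      rcases Nat.lt_or_ge l (m + 1 - d) with h | h
      · have e := core_aux y w m c hc hy hw hanti hyc hwc l (by omega)
          (fun l' a b => ih' l' (by omega) b) l le_rfl (by omega)
        have h3 := ih' (l + 1) (by omega) (by omega)
        rw [prod_range_succ, prod_range_succ, e] at h3
        exact le_of_mul_le_mul_right h3 (hw l (by omega))
      · exact ih' l h h2
  intro i hi
  exact core_aux y w m c hc hy hw hanti hyc hwc 0 (by omega)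
    (fun l _ b => main (m + 1) le_rfl l (by omega) b) i (by omega) hi

lemma sylv_eq (g k : ℕ) : sylv g (k + 1) = tsylv g (k + 1) + 1 := by
  unfold tsylv
  cases k with
  | zero => simp [sylv]
  | succ k => simp [sylv]

lemma tsylv_succ (g k : ℕ) : tsylv g (k + 2) = (tsylv g (k + 1) + 1) * tsylv g (k + 1) := by
  have h : sylv g (k + 2) = sylv g (k + 1) * (sylv g (k + 1) - 1) + 1 := by rw [sylv]
  rw [tsylv, h, sylv_eq]
  simp

lemma tsylv_one (g : ℕ) : tsylv g 1 = g := by simp [tsylv, sylv]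

lemma tsylv_pos (g k : ℕ) (hg : 1 ≤ g) : 0 < tsylv g (k + 1) := by
  induction k with
  | zero => rw [tsylv_one]; omega
  | succ k ih => rw [tsylv_succ]; positivity

lemma sylv_sum (g k : ℕ) (hg : 1 ≤ g) :
    ∑ i ∈ range k, (1 : ℝ) / (sylv g (i + 1) : ℝ) = 1 / g - 1 / (tsylv g (k + 1) : ℝ) := by
  induction k with
  | zero => simp [tsylv_one]
  | succ k ih =>
    rw [sum_range_succ, ih, sylv_eq, tsylv_succ]
    have : (0 : ℝ) < tsylv g (k + 1) := by exact_mod_cast tsylv_pos g k hg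
    have : (0 : ℝ) < g := by exact_mod_cast hg
    push_cast
    field_simp
    ring

lemma sylv_prod (g k : ℕ) (hg : 1 ≤ g) :
    ∏ i ∈ range k, (1 : ℝ) / (sylv g (i + 1) : ℝ) = g / (tsylv g (k + 1) : ℝ) := by
  have : (0 : ℝ) < g := by exact_mod_cast hg
  induction k with
  | zero => simp [tsylv_one]; field_simp
  | succ k ih =>
    rw [prod_range_succ, ih, sylv_eq, tsylv_succ]
    have : (0 : ℝ) < tsylv g (k + 1) := by exact_mod_cast tsylv_pos g k hg
    push_cast
    field_simp

lemma integrality (g : ℕ) (hg : 1 ≤ g) (a : ℕ → ℕ) (ha : ∀ i, 0 < a i) (k : ℕ) :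
    ∃ N : ℤ, (1 : ℝ) / g - ∑ i ∈ range k, (1 : ℝ) / (a i : ℝ)
      = N * (1 / g * ∏ i ∈ range k, (1 : ℝ) / (a i : ℝ)) := by
  have : (0 : ℝ) < g := by exact_mod_cast hg
  induction k with
  | zero => exact ⟨1, by simp⟩
  | succ k ih =>
    obtain ⟨N, hN⟩ := ih
    refine ⟨N * a k - g * ∏ i ∈ range k, (a i : ℤ), ?_⟩
    rw [sum_range_succ, prod_range_succ, ← sub_sub, hN]
    have h1 : (0 : ℝ) < a k := by exact_mod_cast ha k
    have h2 : (0 : ℝ) < ∏ i ∈ range k, (a i : ℝ) :=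
      prod_pos (fun i _ => by exact_mod_cast ha i)
    simp only [one_div, prod_inv_distrib]
    push_cast
    field_simp

lemma nat_version (g m : ℕ) (hg : 1 ≤ g) (a : ℕ → ℕ) (ha : ∀ i, 0 < a i)
    (hmono : ∀ i, i < m → a i ≤ a (i + 1))
    (hsum : (1 : ℝ) / g = ∑ i ∈ range (m + 1), (1 : ℝ) / (a i : ℝ))
    (hp : (tsylv g (m + 1) : ℝ) ^ 2 / g ≤ ∏ i ∈ range (m + 1), (a i : ℝ)) :
    ∀ i, i ≤ m → a i = if i < m then sylv g (i + 1) else tsylv g (m + 1) := by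
  have hg0 : (0 : ℝ) < g := by exact_mod_cast hg
  have ht : (0 : ℝ) < tsylv g (m + 1) := by exact_mod_cast tsylv_pos g m hg
  have ha' : ∀ i, (0 : ℝ) < a i := fun i => by exact_mod_cast ha i
  set b : ℕ → ℕ := fun i => if i < m then sylv g (i + 1) else tsylv g (m + 1) with hb
  have hbpos : ∀ i, 0 < b i := by
    intro i
    simp only [hb]
    split_ifs
    · rw [sylv_eq]; omega
    · exact tsylv_pos g m hg
  have hb' : ∀ i, (0 : ℝ) < b i := fun i => by exact_mod_cast hbpos i
  have hbm : b m = tsylv g (m + 1) := by simp [hb]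
  have hbs : ∀ k, k ≤ m → ∑ i ∈ range k, (1 : ℝ) / (b i : ℝ)
      = 1 / g - 1 / (tsylv g (k + 1) : ℝ) := by
    intro k hk
    rw [← sylv_sum g k hg]
    refine sum_congr rfl (fun i hi => ?_)
    simp at hi
    simp [hb, show i < m by omega]
  have hbp : ∀ k, k ≤ m → ∏ i ∈ range k, (1 : ℝ) / (b i : ℝ)
      = g / (tsylv g (k + 1) : ℝ) := by
    intro k hk
    rw [← sylv_prod g k hg]
    refine prod_congr rfl (fun i hi => ?_)
    simp at hi
    simp [hb, show i < m by omega]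
  have hbsum : ∑ i ∈ range (m + 1), (1 : ℝ) / (b i : ℝ) = 1 / g := by
    rw [sum_range_succ, hbs m le_rfl, hbm]; ring
  have hfull := full_aux (fun i => (1 : ℝ) / (a i : ℝ)) (fun i => (1 : ℝ) / (b i : ℝ)) m (1 / g)
    (by positivity) (fun i _ => one_div_pos.2 (ha' i)) (fun i _ => one_div_pos.2 (hb' i))
    (fun i hi => one_div_le_one_div_of_le (ha' i) (by exact_mod_cast hmono i hi))
    (by
      intro k hk
      obtain ⟨N, hN⟩ := integrality g hg a ha k
      have hsplit := sum_range_add (fun i => (1 : ℝ) / (a i : ℝ)) k (m + 1 - k)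
      rw [show k + (m + 1 - k) = m + 1 by omega, ← hsum] at hsplit
      have hpos : 0 < ∑ i ∈ range (m + 1 - k), (1 : ℝ) / (a (k + i) : ℝ) :=
        sum_pos (fun i _ => one_div_pos.2 (ha' _)) (by simp; omega)
      have hP : 0 < 1 / (g : ℝ) * ∏ i ∈ range k, (1 : ℝ) / (a i : ℝ) :=
        mul_pos (by positivity) (prod_pos (fun i _ => one_div_pos.2 (ha' _)))
      have hE : ∑ i ∈ range (m + 1 - k), (1 : ℝ) / (a (k + i) : ℝ)
        = N * (1 / g * ∏ i ∈ range k, (1 : ℝ) / (a i : ℝ)) := by linarith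
      have hN0 : (0 : ℝ) < N := by
        rw [hE] at hpos
        exact pos_of_mul_pos_left hpos hP.le
      have hN1 : (1 : ℝ) ≤ N := by
        have : 0 < N := by exact_mod_cast hN0
        exact_mod_cast this
      rw [hE]
      nlinarith)
    (by
      intro k hk
      have hsplit := sum_range_add (fun i => (1 : ℝ) / (b i : ℝ)) k (m + 1 - k)
      rw [show k + (m + 1 - k) = m + 1 by omega, hbsum, hbs k hk] at hsplit
      rw [hbp k hk]
      have : 1 / (g : ℝ) * (g / (tsylv g (k + 1) : ℝ)) = 1 / (tsylv g (k + 1) : ℝ) := by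
        field_simp
      rw [this]
      linarith)
    (by
      rw [prod_range_succ (fun i => (1 : ℝ) / (b i : ℝ)), hbp m le_rfl, hbm]
      have h1 : (g : ℝ) / (tsylv g (m + 1) : ℝ) * (1 / (tsylv g (m + 1) : ℝ))
        = 1 / ((tsylv g (m + 1) : ℝ) ^ 2 / g) := by field_simp
      rw [h1]
      have h2 : ∏ i ∈ range (m + 1), (1 : ℝ) / (a i : ℝ)
        = 1 / ∏ i ∈ range (m + 1), (a i : ℝ) := by simp
      rw [h2]
      exact one_div_le_one_div_of_le (by positivity) hp)
  intro i hi
  have h := hfull i hi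
  simp only [one_div, inv_inj, Nat.cast_inj] at h
  exact h

lemma sylv_prod_nat (g m : ℕ) (hg : 1 ≤ g) (a : ℕ → ℕ)
    (h : ∀ i, i ≤ m → a i = if i < m then sylv g (i + 1) else tsylv g (m + 1)) :
    ∏ i ∈ range (m + 1), (a i : ℝ) = (tsylv g (m + 1) : ℝ) ^ 2 / g := by
  have hg0 : (0 : ℝ) < g := by exact_mod_cast hg
  have ht : (0 : ℝ) < tsylv g (m + 1) := by exact_mod_cast tsylv_pos g m hg
  have h1 := sylv_prod g m hg
  have h2 : ∏ i ∈ range m, (a i : ℝ) = ∏ i ∈ range m, (sylv g (i + 1) : ℝ) := by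
    refine prod_congr rfl (fun i hi => ?_)
    simp at hi
    rw [h i (by omega), if_pos hi]
  have h3 : ∏ i ∈ range m, (sylv g (i + 1) : ℝ) = tsylv g (m + 1) / g := by
    simp only [one_div, prod_inv_distrib] at h1
    rw [← inv_inj, h1, inv_div]
  rw [prod_range_succ, h2, h3, h m le_rfl, if_neg (lt_irrefl m)]
  ring

/-- For a unit fraction partition `A = (α₁,…,αₙ)` of `g` with
`g ≥ 1`, `n ≥ 3` and `α₁ ≤ ⋯ ≤ αₙ`, one has `α₁⋯αₙ ≤ t_{g,n}²/g`, with equality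
iff `A = (s_{g,1},…,s_{g,n-1},t_{g,n})`. -/
theorem ufp_product_bound
    (g n : ℕ) (hg : 1 ≤ g) (hn : 3 ≤ n)
    (A : Fin n → ℕ) (hA : IsUFP g A) (hmono : Monotone A) :
    ((∏ i, A i : ℕ) : ℚ) ≤ (tsylv g n : ℚ) ^ 2 / (g : ℚ) ∧
      (((∏ i, A i : ℕ) : ℚ) = (tsylv g n : ℚ) ^ 2 / (g : ℚ) ↔
        ∀ i : Fin n, A i = if i.val + 1 < n then sylv g (i.val + 1) else tsylv g n) := by
  obtain ⟨m, rfl⟩ : ∃ m, n = m + 1 := ⟨n - 1, by omega⟩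
  obtain ⟨hpos, hs⟩ := hA
  set a : ℕ → ℕ := fun i => if h : i < m + 1 then A ⟨i, h⟩ else 1 with ha
  have haA : ∀ i : Fin (m + 1), a i = A i := by
    intro i
    simp only [ha]
    rw [dif_pos i.isLt]
  have hapos : ∀ i, 0 < a i := by
    intro i
    simp only [ha]
    split_ifs
    · exact hpos _
    · exact one_pos
  have hamono : ∀ i, i < m → a i ≤ a (i + 1) := by
    intro i hi
    have h1 := haA ⟨i, by omega⟩
    have h2 := haA ⟨i + 1, by omega⟩
    simp only at h1 h2
    rw [h1, h2]
    exact hmono (by simp)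
  have hasum : (1 : ℝ) / g = ∑ i ∈ range (m + 1), (1 : ℝ) / (a i : ℝ) := by
    rw [sum_range]
    simp only [haA]
    have h := congrArg (fun q : ℚ => (q : ℝ)) hs
    push_cast at h
    exact h
  have hprod : (((∏ i, A i : ℕ) : ℚ) : ℝ) = ∏ i ∈ range (m + 1), (a i : ℝ) := by
    rw [prod_range]
    simp only [haA]
    push_cast
    rfl
  have hcast : (((tsylv g (m + 1) : ℚ) ^ 2 / (g : ℚ) : ℚ) : ℝ)
      = (tsylv g (m + 1) : ℝ) ^ 2 / g := by push_cast; rfl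
  have fwd : (tsylv g (m + 1) : ℚ) ^ 2 / (g : ℚ) ≤ ((∏ i, A i : ℕ) : ℚ) →
      ∀ i, i ≤ m → a i = if i < m then sylv g (i + 1) else tsylv g (m + 1) := by
    intro h
    refine nat_version g m hg a hapos hamono hasum ?_
    rw [← hprod, ← hcast]
    exact Rat.cast_le.2 h
  have bwd : (∀ i, i ≤ m → a i = if i < m then sylv g (i + 1) else tsylv g (m + 1)) →
      ((∏ i, A i : ℕ) : ℚ) = (tsylv g (m + 1) : ℚ) ^ 2 / (g : ℚ) := by
    intro h
    have := sylv_prod_nat g m hg a h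
    rw [← hprod, ← hcast] at this
    exact Rat.cast_injective this
  refine ⟨?_, ?_, ?_⟩
  · rcases le_total (((∏ i, A i : ℕ) : ℚ)) ((tsylv g (m + 1) : ℚ) ^ 2 / (g : ℚ)) with h | h
    · exact h
    · exact (bwd (fwd h)).le
  · intro h i
    have := fwd h.ge i.val (by omega)
    rw [haA] at this
    rw [this]
    simp
  · intro h
    refine bwd (fun i hi => ?_)
    have h1 := h ⟨i, by omega⟩
    rw [← haA] at h1
    simpa using h1
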